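/- Let a, b, c be nonnegative integers with a+1 ≥ b, a+1 ≥ c and b+1 ≥ c. Then in ℚ(q,t): F₃(a,b,c) = ∑_λ q^{area(λ)} t^{stat(λ)}, the sum running over all partitions λ = (x,y,z) with x ≥ y ≥ z ≥ 0, x ≤ a+b+c, y ≤ b+c and z ≤ c. -/

import Mathlib

open Finset

noncomputable section

/-- The field `ℚ(q,t)` of rational functions in two variables over `ℚ`. -/
abbrev K : Type := FractionRing (MvPolynomial (Fin 2) ℚ)

/-- The variable `q` in `ℚ(q,t)`. -/
def q : K := algebraMap (MvPolynomial (Fin 2) ℚ) K (MvPolynomial.X 0)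

/-- The variable `t` in `ℚ(q,t)`. -/
def t : K := algebraMap (MvPolynomial (Fin 2) ℚ) K (MvPolynomial.X 1)

/-- `H₂(a,b)` as a function of the two variables `x`, `y` (so that interchanging the
arguments interchanges `q` and `t`):
`H₂(a,b;x,y) = x^{a+2b}/(1 − y/x²) + x^a y^b/(1 − x²/y)`. -/
def H₂ (a b : ℤ) (x y : K) : K :=
  x ^ (a + 2 * b) / (1 - y / x ^ 2) + x ^ a * y ^ b / (1 - x ^ 2 / y)

/-- `H₃(a,b,c;x,y)`, the head-like standard-tableau expansion for `n = 4`. -/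
def H₃ (a b c : ℤ) (x y : K) : K :=
  x ^ (a + 2 * b + 3 * c) / ((1 - y / x ^ 2) * (1 - y / x ^ 3))
    + x ^ (a + 2 * b) * y ^ c / ((1 - y / x ^ 2) * (1 - x ^ 3 / y))
    + x ^ (a + 2 * c) * y ^ b * (1 - y) / ((1 - y ^ 2 / x ^ 2) * (1 - x ^ 2 / y) * (1 - y / x))
    + x ^ a * y ^ (b + 2 * c) / ((1 - x ^ 2 / y ^ 2) * (1 - x / y))
    + x ^ (a + c) * y ^ (b + c) * (1 - x) / ((1 - x ^ 2 / y) * (1 - x / y) * (1 - y / x))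

/-- `F₁(m) = (q^{m+1} − t^{m+1})/(q − t)`, the function `F(a)` of the paper. -/
def F₁ (m : ℤ) : K := (q ^ (m + 1) - t ^ (m + 1)) / (q - t)

/-- `F₂(a,b) = H₂(a,b;q,t)/(1 − t/q) + H₂(a,b;t,q)/(1 − q/t)`. -/
def F₂ (a b : ℤ) : K := H₂ a b q t / (1 - t / q) + H₂ a b t q / (1 - q / t)

/-- `F₃(a,b,c) = H₃(a,b,c;q,t)/(1 − t/q) + H₃(a,b,c;t,q)/(1 − q/t)`. -/
def F₃ (a b c : ℤ) : K := H₃ a b c q t / (1 - t / q) + H₃ a b c t q / (1 - q / t)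

/-- `⌈m/2⌉` for an integer `m`, computed as `⌊(m+1)/2⌋`. -/
def ceilHalf (m : ℤ) : ℤ := Int.fdiv (m + 1) 2

/-- The Finset of all subpartitions `(x,y,z)` of `λ(a,b,c) = (a+b+c, b+c, c)`. -/
def subparts (a b c : ℤ) : Finset (ℤ × ℤ × ℤ) :=
  ((Finset.Icc 0 (a + b + c)) ×ˢ (Finset.Icc 0 (b + c)) ×ˢ (Finset.Icc 0 c)).filter
    (fun w => w.2.1 ≤ w.1 ∧ w.2.2 ≤ w.2.1)

/-- The `t`-statistic of a subpartition `(x,y,z)` of `λ(a,b,c)`, defined by cases. -/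
def statFn (a b c x y z : ℤ) : ℤ :=
  if z < min (b + c - x) (ceilHalf (y - a)) then
    -- Case 2
    y + z
  else if x + y - z + 2 * max 0 (y + z - b - c) < a + b + c then
    -- Case 1(a)
    x + max (max 0 (ceilHalf (y - a)))
        (max (y + z - b - c) (ceilHalf (2 * y + z - (a + b + c))))
  else if y + z < b + c then
    -- Case 1(b)(i)
    -(a + b + c) + 2 * x + y - z + max 0 (ceilHalf ((a + b + c) + z - x - a))
  else
    -- Case 1(b)(ii)
    2 * x + 3 * y + z - (a + 3 * b + 3 * c)
      + max (max 0 (ceilHalf (2 * b + 2 * c - x - y))) (a + 2 * b + 2 * c - x - 2 * y)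

lemma ceilHalf_eq (m : ℤ) : ceilHalf m = (m + 1) / 2 := by
  unfold ceilHalf
  rw [Int.fdiv_eq_ediv_of_nonneg _ (by norm_num)]

lemma stat_R2 {a b c x y z : ℤ} (h1 : a + 2 * z < y) (h2 : x + z < b + c) :
    statFn a b c x y z = y + z := by
  unfold statFn
  simp only [ceilHalf_eq]
  rw [if_pos (by omega)]

lemma stat_LO {a b c x y z : ℤ} (h0 : y ≤ a + 2 * z ∨ b + c ≤ x + z)
    (h1 : y + z < b + c) (h2 : x + y - z < a + b + c) :
    statFn a b c x y z = x + max 0 ((y - a + 1) / 2) := by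
  unfold statFn
  simp only [ceilHalf_eq]
  rw [if_neg (by omega), if_pos (by omega)]
  omega

lemma stat_HI {a b c x y z : ℤ} (hzc : z ≤ c) (hyx : y ≤ x) (hab : b ≤ a + 1)
    (h1 : b + c ≤ y + z) (h2 : x + 3 * y + z < a + 3 * b + 3 * c) :
    statFn a b c x y z
      = x + max (y + z - b - c) ((2 * y + z - a - b - c + 1) / 2) := by
  unfold statFn
  simp only [ceilHalf_eq]
  rw [if_neg (by omega), if_pos (by omega)]
  omega

lemma stat_BI {a b c x y z : ℤ} (h0 : y ≤ a + 2 * z ∨ b + c ≤ x + z)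
    (h1 : y + z < b + c) (h2 : a + b + c ≤ x + y - z) :
    statFn a b c x y z
      = -(a + b + c) + 2 * x + y - z + max 0 ((b + c + z - x + 1) / 2) := by
  unfold statFn
  simp only [ceilHalf_eq]
  rw [if_neg (by omega), if_neg (by omega), if_pos (by omega)]
  omega

lemma stat_BII {a b c x y z : ℤ} (hyx : y ≤ x)
    (h1 : b + c ≤ y + z) (h2 : a + 3 * b + 3 * c ≤ x + 3 * y + z) :
    statFn a b c x y z
      = 2 * x + 3 * y + z - (a + 3 * b + 3 * c)
        + max (max 0 ((2 * b + 2 * c - x - y + 1) / 2)) (a + 2 * b + 2 * c - x - 2 * y) := by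
  unfold statFn
  simp only [ceilHalf_eq]
  rw [if_neg (by omega), if_neg (by omega), if_neg (by omega)]

/-- Next element of a string. -/
def nxt (a b c : ℤ) (p : ℤ × ℤ × ℤ) : ℤ × ℤ × ℤ :=
  if a + 2 * p.2.2 < p.2.1 ∧ p.1 + p.2.2 < b + c then
    if a + 2 * p.2.2 + 2 < p.2.1 ∧ p.1 + p.2.2 + 1 < b + c then (p.1, p.2.1, p.2.2 + 1)
    else if p.1 + (p.2.1 - a + 1) / 2 < b + c then
      (p.2.1, p.2.1, p.1 - p.2.1 + (p.2.1 - a + 1) / 2)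
    else
      (b + c - (p.1 - p.2.1 + (p.2.1 - a + 1) / 2), b + c - (p.1 - p.2.1 + (p.2.1 - a + 1) / 2),
        p.2.1 - b - c + 2 * (p.1 - p.2.1 + (p.2.1 - a + 1) / 2))
  else if p.2.1 + p.2.2 < b + c then
    if p.1 + p.2.1 - p.2.2 < a + b + c then (p.1 + 1, p.2.1, p.2.2)
    else (p.1, p.2.1 + 1, p.2.2)
  else if p.1 + 3 * p.2.1 + p.2.2 < a + 3 * b + 3 * c then (p.1 + 1, p.2.1, p.2.2)
  else (p.1, p.2.1, p.2.2 + 1)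

/-- Previous element of a string. -/
def prv (a b c : ℤ) (p : ℤ × ℤ × ℤ) : ℤ × ℤ × ℤ :=
  if a + 2 * p.2.2 < p.2.1 ∧ p.1 + p.2.2 < b + c then (p.1, p.2.1, p.2.2 - 1)
  else if p.2.1 + p.2.2 < b + c then
    if p.1 + p.2.1 - p.2.2 < a + b + c then
      if p.2.1 < p.1 then (p.1 - 1, p.2.1, p.2.2)
      else (p.2.1 + p.2.2 - (p.2.1 - a + 1) / 2, p.2.1, (p.2.1 - a + 1) / 2 - 1)
    else if a + b + c < p.1 + p.2.1 - p.2.2 ∧ b + c ≤ p.1 + p.2.2 then (p.1, p.2.1 - 1, p.2.2)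
    else (p.1 - 1, p.2.1, p.2.2)
  else if b + c < p.2.1 + p.2.2 ∧ a + 3 * b + 3 * c < p.1 + 3 * p.2.1 + p.2.2 then
    (p.1, p.2.1, p.2.2 - 1)
  else if p.2.1 + p.2.2 = b + c ∧ a + 2 * p.2.2 < p.1 then (p.1, p.2.1 - 1, p.2.2)
  else if p.2.1 < p.1 then (p.1 - 1, p.2.1, p.2.2)
  else
    (p.2.1 + p.2.2 - (2 * p.2.1 + p.2.2 - b - c - a + 1) / 2, 2 * p.2.1 + p.2.2 - b - c,
      b + c - (p.2.1 + p.2.2 - (2 * p.2.1 + p.2.2 - b - c - a + 1) / 2) - 1)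

/-- Last elements of strings. -/
def IsEnd (a b c : ℤ) (p : ℤ × ℤ × ℤ) : Prop :=
  p.2.2 = c ∧ b + c ≤ p.2.1 + p.2.2 ∧ a + 3 * b + 3 * c ≤ p.1 + 3 * p.2.1 + p.2.2

/-- First elements of strings. -/
def IsStart (a b c : ℤ) (p : ℤ × ℤ × ℤ) : Prop :=
  (a < p.2.1 ∧ p.1 < b + c ∧ p.2.2 = 0) ∨
  (p.1 = p.2.1 ∧ p.2.1 + p.2.2 < b + c ∧ p.2.1 ≤ a) ∨
  (p.1 = p.2.1 ∧ b + c ≤ p.2.1 + p.2.2 ∧ p.1 + 3 * p.2.1 + p.2.2 ≤ a + 3 * b + 3 * c ∧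
    (2 * p.2.1 + p.2.2 ≤ a + b + c ∨ b + c ≤ a + p.2.2))

/-- Membership in the set of subpartitions. -/
def InP (a b c : ℤ) (p : ℤ × ℤ × ℤ) : Prop :=
  0 ≤ p.2.2 ∧ p.2.2 ≤ c ∧ p.2.2 ≤ p.2.1 ∧ p.2.1 ≤ b + c ∧ p.2.1 ≤ p.1 ∧ p.1 ≤ a + b + c

lemma mem_subparts {a b c : ℤ} (p : ℤ × ℤ × ℤ) : p ∈ subparts a b c ↔ InP a b c p := by
  unfold subparts InP
  simp only [Finset.mem_filter, Finset.mem_product, Finset.mem_Icc]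
  omega

lemma nxt_mem {a b c : ℤ} (ha : 0 ≤ a) (hb : 0 ≤ b) (hc : 0 ≤ c)
    (hab : b ≤ a + 1) (hac : c ≤ a + 1) (hbc : c ≤ b + 1) (p : ℤ × ℤ × ℤ)
    (hp : InP a b c p) (he : ¬ IsEnd a b c p) :
    InP a b c (nxt a b c p) ∧ ¬ IsStart a b c (nxt a b c p) := by
  obtain ⟨x, y, z⟩ := p
  unfold InP IsEnd at *
  unfold nxt
  unfold IsStart
  dsimp only at *
  split_ifs <;> dsimp only <;> constructor <;> omega

lemma prv_mem {a b c : ℤ} (ha : 0 ≤ a) (hb : 0 ≤ b) (hc : 0 ≤ c)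
    (hab : b ≤ a + 1) (hac : c ≤ a + 1) (hbc : c ≤ b + 1) (p : ℤ × ℤ × ℤ)
    (hp : InP a b c p) (he : ¬ IsStart a b c p) :
    InP a b c (prv a b c p) ∧ ¬ IsEnd a b c (prv a b c p) := by
  obtain ⟨x, y, z⟩ := p
  unfold InP IsStart at *
  unfold prv
  unfold IsEnd
  dsimp only at *
  split_ifs <;> dsimp only <;> constructor <;> omega


lemma prv_nxt {a b c : ℤ} (ha : 0 ≤ a) (hb : 0 ≤ b) (hc : 0 ≤ c)
    (hab : b ≤ a + 1) (hac : c ≤ a + 1) (hbc : c ≤ b + 1) (p : ℤ × ℤ × ℤ)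
    (hp : InP a b c p) (he : ¬ IsEnd a b c p) :
    prv a b c (nxt a b c p) = p := by
  obtain ⟨x, y, z⟩ := p
  unfold InP IsEnd at *
  unfold nxt
  dsimp only at *
  split_ifs <;> unfold prv <;> dsimp only <;> split_ifs <;>
    refine Prod.ext ?_ (Prod.ext ?_ ?_) <;> dsimp only <;> omega

lemma nxt_prv {a b c : ℤ} (ha : 0 ≤ a) (hb : 0 ≤ b) (hc : 0 ≤ c)
    (hab : b ≤ a + 1) (hac : c ≤ a + 1) (hbc : c ≤ b + 1) (p : ℤ × ℤ × ℤ)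
    (hp : InP a b c p) (he : ¬ IsStart a b c p) :
    nxt a b c (prv a b c p) = p := by
  obtain ⟨x, y, z⟩ := p
  unfold InP IsStart at *
  unfold prv
  dsimp only at *
  split_ifs <;> unfold nxt <;> dsimp only <;> split_ifs <;>
    refine Prod.ext ?_ (Prod.ext ?_ ?_) <;> dsimp only <;> omega

/-- The size of a partition. -/
def siz (p : ℤ × ℤ × ℤ) : ℤ := p.1 + p.2.1 + p.2.2

/-- The statistic on triples. -/
def st (a b c : ℤ) (p : ℤ × ℤ × ℤ) : ℤ := statFn a b c p.1 p.2.1 p.2.2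

lemma siz_nxt {a b c : ℤ} (p : ℤ × ℤ × ℤ) : siz (nxt a b c p) = siz p + 1 := by
  obtain ⟨x, y, z⟩ := p
  unfold siz nxt
  dsimp only at *
  split_ifs <;> dsimp only <;> omega

lemma st_nxt {a b c : ℤ} (ha : 0 ≤ a) (hb : 0 ≤ b) (hc : 0 ≤ c)
    (hab : b ≤ a + 1) (hac : c ≤ a + 1) (hbc : c ≤ b + 1) (p : ℤ × ℤ × ℤ)
    (hp : InP a b c p) (he : ¬ IsEnd a b c p) :
    st a b c (nxt a b c p) = st a b c p + 1 := by
  have hm := (nxt_mem ha hb hc hab hac hbc p hp he).1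
  obtain ⟨x, y, z⟩ := p
  unfold InP IsEnd at *
  unfold nxt at *
  unfold st
  dsimp only at *
  split_ifs at * with h1 h2 h3 h4 h5 h6
  · dsimp only at *
    rw [stat_R2 (by omega) (by omega), stat_R2 (by omega) (by omega)]; omega
  · dsimp only at *
    rw [stat_R2 (x := x) (by omega) (by omega)]
    by_cases h : y + y - (x - y + (y - a + 1) / 2) < a + b + c
    · rw [stat_LO (by omega) (by omega) h]; omega
    · rw [stat_BI (by omega) (by omega) (by omega)]; omega
  · dsimp only at *
    rw [stat_R2 (x := x) (by omega) (by omega)]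
    set e := (y - a + 1) / 2 with he
    by_cases h : (b + c - (x - y + e)) + 3 * (b + c - (x - y + e)) + (y - b - c + 2 * (x - y + e)) < a + 3 * b + 3 * c
    · rw [stat_HI (by omega) (by omega) hab (by omega) h]; omega
    · rw [stat_BII (by omega) (by omega) (by omega)]; omega
  · dsimp only at *
    rw [stat_LO (x := x) (by omega) (by omega) (by omega)]
    by_cases h : x + 1 + y - z < a + b + c
    · rw [stat_LO (by omega) (by omega) h]; omega
    · rw [stat_BI (by omega) (by omega) (by omega)]; omega
  · dsimp only at *
    rw [stat_BI (y := y) (by omega) (by omega) (by omega)]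
    by_cases h : y + 1 + z < b + c
    · rw [stat_BI (by omega) (by omega) (by omega)]; omega
    · by_cases h' : x + 3 * (y + 1) + z < a + 3 * b + 3 * c
      · rw [stat_HI (by omega) (by omega) hab (by omega) h']; omega
      · rw [stat_BII (by omega) (by omega) (by omega)]; omega
  · dsimp only at *
    rw [stat_HI (x := x) (by omega) (by omega) hab (by omega) (by omega)]
    by_cases h' : x + 1 + 3 * y + z < a + 3 * b + 3 * c
    · rw [stat_HI (by omega) (by omega) hab (by omega) h']; omega
    · rw [stat_BII (by omega) (by omega) (by omega)]; omega
  · dsimp only at *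
    rw [stat_BII (by omega) (by omega) (by omega), stat_BII (by omega) (by omega) (by omega)]; omega

lemma q_ne : q ≠ 0 := by
  unfold q
  rw [Ne, FaithfulSMul.algebraMap_eq_zero_iff]
  exact MvPolynomial.X_ne_zero 0

lemma t_ne : t ≠ 0 := by
  unfold t
  rw [Ne, FaithfulSMul.algebraMap_eq_zero_iff]
  exact MvPolynomial.X_ne_zero 1

/-- A polynomial relation between `q` and `t` must hold at all rational points. -/
lemma rel_ne (P : MvPolynomial (Fin 2) ℚ) (u : Fin 2 → ℚ) (h : MvPolynomial.eval u P ≠ 0) :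
    algebraMap (MvPolynomial (Fin 2) ℚ) K P ≠ 0 := by
  rw [Ne, FaithfulSMul.algebraMap_eq_zero_iff]
  rintro rfl
  simp at h

lemma d11 : q - t ≠ 0 := by
  have := rel_ne (MvPolynomial.X 0 - MvPolynomial.X 1) ![2, 1] (by simp; norm_num)
  simpa [q, t] using this

lemma s11 : q + t ≠ 0 := by
  have := rel_ne (MvPolynomial.X 0 + MvPolynomial.X 1) ![2, 1] (by simp; norm_num)
  simpa [q, t] using this

lemma d21 : q ^ 2 - t ≠ 0 := by
  have := rel_ne (MvPolynomial.X 0 ^ 2 - MvPolynomial.X 1) ![2, 1] (by simp; norm_num)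
  simpa [q, t] using this

lemma d12 : t ^ 2 - q ≠ 0 := by
  have := rel_ne (MvPolynomial.X 1 ^ 2 - MvPolynomial.X 0) ![2, 1] (by simp; norm_num)
  simpa [q, t] using this

lemma d31 : q ^ 3 - t ≠ 0 := by
  have := rel_ne (MvPolynomial.X 0 ^ 3 - MvPolynomial.X 1) ![2, 1] (by simp; norm_num)
  simpa [q, t] using this

lemma d13 : t ^ 3 - q ≠ 0 := by
  have := rel_ne (MvPolynomial.X 1 ^ 3 - MvPolynomial.X 0) ![2, 1] (by simp; norm_num)
  simpa [q, t] using this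

/-- Monomials. -/
def W (m n : ℤ) : K := q ^ m * t ^ n

lemma W_add (m n i j : ℤ) : W (m + i) (n + j) = W m n * (q ^ i * t ^ j) := by
  unfold W
  rw [zpow_add₀ q_ne, zpow_add₀ t_ne]
  ring

/-- The weight of a partition. -/
def wt (a b c : ℤ) (p : ℤ × ℤ × ℤ) : K := W (a + 2 * b + 3 * c - siz p) (st a b c p)

lemma wt_nxt {a b c : ℤ} (ha : 0 ≤ a) (hb : 0 ≤ b) (hc : 0 ≤ c)
    (hab : b ≤ a + 1) (hac : c ≤ a + 1) (hbc : c ≤ b + 1) (p : ℤ × ℤ × ℤ)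
    (hp : InP a b c p) (he : ¬ IsEnd a b c p) :
    t * wt a b c p = q * wt a b c (nxt a b c p) := by
  unfold wt
  rw [st_nxt ha hb hc hab hac hbc p hp he, siz_nxt]
  have e : a + 2 * b + 3 * c - (siz p + 1) = a + 2 * b + 3 * c - siz p + (-1) := by ring
  rw [e, W_add, zpow_neg_one, zpow_one]
  have := q_ne
  field_simp

open Classical in
/-- Starts of strings. -/
def starts (a b c : ℤ) : Finset (ℤ × ℤ × ℤ) := (subparts a b c).filter (fun p => IsStart a b c p)

open Classical in
/-- Ends of strings. -/
def ends (a b c : ℤ) : Finset (ℤ × ℤ × ℤ) := (subparts a b c).filter (fun p => IsEnd a b c p)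

open Classical in
lemma step1 {a b c : ℤ} (ha : 0 ≤ a) (hb : 0 ≤ b) (hc : 0 ≤ c)
    (hab : b ≤ a + 1) (hac : c ≤ a + 1) (hbc : c ≤ b + 1) :
    (q - t) * ∑ p ∈ subparts a b c, wt a b c p
      = ∑ p ∈ starts a b c, q * wt a b c p - ∑ p ∈ ends a b c, t * wt a b c p := by
  have h1 := Finset.sum_filter_add_sum_filter_not (subparts a b c) (fun p => IsStart a b c p)
    (fun p => q * wt a b c p)
  have h2 := Finset.sum_filter_add_sum_filter_not (subparts a b c) (fun p => IsEnd a b c p)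
    (fun p => t * wt a b c p)
  have h3 : ∑ p ∈ (subparts a b c).filter (fun p => ¬ IsEnd a b c p), t * wt a b c p
      = ∑ p ∈ (subparts a b c).filter (fun p => ¬ IsStart a b c p), q * wt a b c p := by
    refine Finset.sum_nbij' (nxt a b c) (prv a b c) ?_ ?_ ?_ ?_ ?_
    · intro p hp
      simp only [Finset.mem_filter, mem_subparts] at hp ⊢
      exact nxt_mem ha hb hc hab hac hbc p hp.1 hp.2
    · intro p hp
      simp only [Finset.mem_filter, mem_subparts] at hp ⊢
      exact prv_mem ha hb hc hab hac hbc p hp.1 hp.2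
    · intro p hp
      simp only [Finset.mem_filter, mem_subparts] at hp
      exact prv_nxt ha hb hc hab hac hbc p hp.1 hp.2
    · intro p hp
      simp only [Finset.mem_filter, mem_subparts] at hp
      exact nxt_prv ha hb hc hab hac hbc p hp.1 hp.2
    · intro p hp
      simp only [Finset.mem_filter, mem_subparts] at hp
      exact wt_nxt ha hb hc hab hac hbc p hp.1 hp.2
  unfold starts ends
  rw [sub_mul, Finset.mul_sum, Finset.mul_sum, ← h1, ← h2, h3]
  ring

/-- Index set of the first kind of strings. -/
def setG (b c : ℤ) : Finset (Σ _ : ℤ, ℤ) :=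
  (Finset.Icc 0 (min b c)).sigma (fun z => Finset.Icc z (b + c - 1 - z))

/-- Index set of the second kind of strings. -/
def setM (a b c : ℤ) : Finset (Σ _ : ℤ, ℤ) :=
  (Finset.Icc 0 (min b c)).sigma (fun z =>
    Finset.Icc (max (b + c - z) (2 * b + 2 * c - a - 2 * z)) (min (a + 2 * z) (b + 2 * c - 2 * z)))

lemma mem_starts {a b c : ℤ} (p : ℤ × ℤ × ℤ) :
    p ∈ starts a b c ↔ InP a b c p ∧ IsStart a b c p := by
  unfold starts
  classical
  rw [Finset.mem_filter, mem_subparts]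

lemma mem_ends {a b c : ℤ} (p : ℤ × ℤ × ℤ) :
    p ∈ ends a b c ↔ InP a b c p ∧ IsEnd a b c p := by
  unfold ends
  classical
  rw [Finset.mem_filter, mem_subparts]

lemma mem_setG {b c : ℤ} (p : Σ _ : ℤ, ℤ) :
    p ∈ setG b c ↔ (0 ≤ p.1 ∧ p.1 ≤ b ∧ p.1 ≤ c ∧ p.1 ≤ p.2 ∧ p.2 + p.1 < b + c) := by
  unfold setG
  simp only [Finset.mem_sigma, Finset.mem_Icc]
  omega

lemma mem_setM {a b c : ℤ} (p : Σ _ : ℤ, ℤ) :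
    p ∈ setM a b c ↔ (0 ≤ p.1 ∧ p.1 ≤ b ∧ p.1 ≤ c ∧ b + c ≤ p.2 + p.1 ∧
      2 * b + 2 * c - a - 2 * p.1 ≤ p.2 ∧ p.2 ≤ a + 2 * p.1 ∧ p.2 ≤ b + 2 * c - 2 * p.1) := by
  unfold setM
  simp only [Finset.mem_sigma, Finset.mem_Icc]
  omega

lemma q_wt {a b c : ℤ} (p : ℤ × ℤ × ℤ) :
    q * wt a b c p = W (a + 2 * b + 3 * c + 1 - siz p) (st a b c p) := by
  unfold wt W
  rw [show a + 2 * b + 3 * c + 1 - siz p = a + 2 * b + 3 * c - siz p + 1 by ring,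
    zpow_add₀ q_ne, zpow_one]
  ring

lemma t_wt {a b c : ℤ} (p : ℤ × ℤ × ℤ) :
    t * wt a b c p = W (a + 2 * b + 3 * c - siz p) (st a b c p + 1) := by
  unfold wt W
  rw [zpow_add₀ t_ne, zpow_one]
  ring

lemma starts_G {a b c : ℤ} (ha : 0 ≤ a) (hb : 0 ≤ b) (hc : 0 ≤ c)
    (hab : b ≤ a + 1) (hac : c ≤ a + 1) (hbc : c ≤ b + 1) :
    ∑ p ∈ (starts a b c).filter (fun p => p.2.1 + p.2.2 < b + c), q * wt a b c p
      = ∑ g ∈ setG b c, W (a + 2 * b + 3 * c + 1 - 2 * g.2 - g.1) g.2 := by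
  refine Finset.sum_nbij' (fun p => ⟨p.1 - p.2.1 + p.2.2, p.2.1⟩)
    (fun g => if a < g.2 then (g.2 + g.1, g.2, 0) else (g.2, g.2, g.1)) ?_ ?_ ?_ ?_ ?_
  · rintro ⟨x, y, z⟩ hp
    simp only [Finset.mem_filter, mem_starts, mem_setG, InP, IsStart] at hp ⊢
    omega
  · rintro ⟨z, y⟩ hp
    simp only [mem_setG] at hp
    simp only [Finset.mem_filter, mem_starts, InP, IsStart, true_and, and_true]
    split_ifs <;> dsimp only <;> omega
  · rintro ⟨x, y, z⟩ hp
    simp only [Finset.mem_filter, mem_starts, InP, IsStart, true_and, and_true] at hp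
    dsimp only
    split_ifs <;> refine Prod.ext ?_ (Prod.ext ?_ ?_) <;> dsimp only <;> omega
  · rintro ⟨z, y⟩ hp
    simp only [mem_setG] at hp
    dsimp only
    split_ifs <;> dsimp only <;> congr 1 <;> omega
  · rintro ⟨x, y, z⟩ hp
    simp only [Finset.mem_filter, mem_starts, InP, IsStart, true_and, and_true] at hp
    rw [q_wt]
    dsimp only
    have hs : st a b c (x, y, z) = y := by
      unfold st
      dsimp only
      by_cases h : a < y
      · rw [stat_R2 (by omega) (by omega)]; omega
      · by_cases h' : x + y - z < a + b + c
        · rw [stat_LO (by omega) (by omega) h']; omega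
        · rw [stat_BI (by omega) (by omega) (by omega)]; omega
    rw [hs]
    congr 1
    unfold siz
    dsimp only
    omega

lemma starts_M {a b c : ℤ} (ha : 0 ≤ a) (hb : 0 ≤ b) (hc : 0 ≤ c)
    (hab : b ≤ a + 1) (hac : c ≤ a + 1) (hbc : c ≤ b + 1) :
    ∑ p ∈ (starts a b c).filter (fun p => ¬ p.2.1 + p.2.2 < b + c), q * wt a b c p
      = ∑ g ∈ setM a b c, W (a + b + 2 * c + 1 - g.2) g.2 := by
  refine Finset.sum_nbij' (fun p => ⟨b + c - p.2.1, 2 * p.2.1 + p.2.2 - b - c⟩)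
    (fun g => (b + c - g.1, b + c - g.1, g.2 - b - c + 2 * g.1)) ?_ ?_ ?_ ?_ ?_
  · rintro ⟨x, y, z⟩ hp
    simp only [Finset.mem_filter, mem_starts, mem_setM, InP, IsStart] at hp ⊢
    omega
  · rintro ⟨z, y⟩ hp
    simp only [mem_setM] at hp
    simp only [Finset.mem_filter, mem_starts, InP, IsStart, true_and, and_true]
    omega
  · rintro ⟨x, y, z⟩ hp
    simp only [Finset.mem_filter, mem_starts, InP, IsStart, true_and, and_true] at hp
    refine Prod.ext ?_ (Prod.ext ?_ ?_) <;> dsimp only <;> omega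
  · rintro ⟨z, y⟩ hp
    simp only [mem_setM] at hp
    dsimp only
    congr 1 <;> omega
  · rintro ⟨x, y, z⟩ hp
    simp only [Finset.mem_filter, mem_starts, InP, IsStart, true_and, and_true] at hp
    rw [q_wt]
    dsimp only
    have hs : st a b c (x, y, z) = 2 * y + z - b - c := by
      unfold st
      dsimp only
      by_cases h' : x + 3 * y + z < a + 3 * b + 3 * c
      · rw [stat_HI (by omega) (by omega) hab (by omega) h']; omega
      · rw [stat_BII (by omega) (by omega) (by omega)]; omega
    rw [hs]
    congr 1
    unfold siz
    dsimp only
    omega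

/-- The positive part of `⌈(y-a)/2⌉`. -/
def mu (a y : ℤ) : ℤ := max 0 ((y - a + 1) / 2)

lemma ends_G {a b c : ℤ} (ha : 0 ≤ a) (hb : 0 ≤ b) (hc : 0 ≤ c)
    (hab : b ≤ a + 1) (hac : c ≤ a + 1) (hbc : c ≤ b + 1) :
    ∑ p ∈ (ends a b c).filter (fun p => a + b + c - p.1 + 2 * (b + c - p.2.1)
        < b + c + mu a (a + b + c - p.1 + (b + c - p.2.1))), t * wt a b c p
      = ∑ g ∈ setG b c, W g.2 (a + 2 * b + 3 * c + 1 - 2 * g.2 - g.1) := by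
  refine Finset.sum_nbij'
    (fun p => ⟨b + c - p.2.1 - mu a (a + b + c - p.1 + (b + c - p.2.1)),
      a + b + c - p.1 + (b + c - p.2.1)⟩)
    (fun g => (a + b + c - g.2 + (g.1 + mu a g.2), b + c - (g.1 + mu a g.2), c)) ?_ ?_ ?_ ?_ ?_
  · rintro ⟨x, y, z⟩ hp
    rw [Finset.mem_filter, mem_ends] at hp
    rw [mem_setG]
    simp only [InP, IsEnd, mu] at hp ⊢
    omega
  · rintro ⟨z, y⟩ hp
    simp only [mem_setG] at hp
    simp only [Finset.mem_filter, mem_ends, InP, IsEnd, true_and, and_true]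
    have e : a + b + c - (a + b + c - y + (z + mu a y)) + (b + c - (b + c - (z + mu a y))) = y := by
      ring
    rw [e]
    simp only [mu]
    omega
  · rintro ⟨x, y, z⟩ hp
    simp only [Finset.mem_filter, mem_ends, InP, IsEnd, true_and, and_true] at hp
    refine Prod.ext ?_ (Prod.ext ?_ ?_) <;> dsimp only <;> omega
  · rintro ⟨z, y⟩ hp
    simp only [mem_setG] at hp
    dsimp only
    have e : a + b + c - (a + b + c - y + (z + mu a y)) + (b + c - (b + c - (z + mu a y))) = y := by
      ring
    rw [e]
    congr 1
    omega
  · rintro ⟨x, y, z⟩ hp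
    rw [Finset.mem_filter, mem_ends] at hp
    simp only [InP, IsEnd, mu] at hp
    rw [t_wt]
    have hs : st a b c (x, y, z) + 1 = a + 2 * b + 3 * c + 1
        - 2 * (a + b + c - x + (b + c - y))
        - (b + c - y - mu a (a + b + c - x + (b + c - y))) := by
      unfold st
      dsimp only
      rw [stat_BII (by omega) (by omega) (by omega)]
      simp only [mu]
      omega
    rw [hs]
    congr 1
    unfold siz
    dsimp only
    omega

lemma ends_M {a b c : ℤ} (ha : 0 ≤ a) (hb : 0 ≤ b) (hc : 0 ≤ c)
    (hab : b ≤ a + 1) (hac : c ≤ a + 1) (hbc : c ≤ b + 1) :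
    ∑ p ∈ (ends a b c).filter (fun p => ¬ a + b + c - p.1 + 2 * (b + c - p.2.1)
        < b + c + mu a (a + b + c - p.1 + (b + c - p.2.1))), t * wt a b c p
      = ∑ g ∈ setM a b c, W g.2 (a + b + 2 * c + 1 - g.2) := by
  refine Finset.sum_nbij'
    (fun p => ⟨b + c - p.2.1, a + b + c - p.1 + (b + c - p.2.1)⟩)
    (fun g => (a + b + c - g.2 + g.1, b + c - g.1, c)) ?_ ?_ ?_ ?_ ?_
  · rintro ⟨x, y, z⟩ hp
    rw [Finset.mem_filter, mem_ends] at hp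
    rw [mem_setM]
    simp only [InP, IsEnd, mu] at hp ⊢
    omega
  · rintro ⟨z, y⟩ hp
    simp only [mem_setM] at hp
    simp only [Finset.mem_filter, mem_ends, InP, IsEnd, true_and, and_true]
    have e : a + b + c - (a + b + c - y + z) + (b + c - (b + c - z)) = y := by ring
    rw [e]
    simp only [mu]
    omega
  · rintro ⟨x, y, z⟩ hp
    simp only [Finset.mem_filter, mem_ends, InP, IsEnd, true_and, and_true] at hp
    refine Prod.ext ?_ (Prod.ext ?_ ?_) <;> dsimp only <;> omega
  · rintro ⟨z, y⟩ hp
    dsimp only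
    congr 1 <;> omega
  · rintro ⟨x, y, z⟩ hp
    rw [Finset.mem_filter, mem_ends] at hp
    simp only [InP, IsEnd, mu] at hp
    rw [t_wt]
    have hs : st a b c (x, y, z) + 1 = a + b + 2 * c + 1
        - (a + b + c - x + (b + c - y)) := by
      unfold st
      dsimp only
      rw [stat_BII (by omega) (by omega) (by omega)]
      omega
    rw [hs]
    congr 1
    unfold siz
    dsimp only
    omega

lemma step2 {a b c : ℤ} (ha : 0 ≤ a) (hb : 0 ≤ b) (hc : 0 ≤ c)
    (hab : b ≤ a + 1) (hac : c ≤ a + 1) (hbc : c ≤ b + 1) :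
    (q - t) * ∑ p ∈ subparts a b c, wt a b c p
      = ∑ g ∈ setG b c, (W (a + 2 * b + 3 * c + 1 - 2 * g.2 - g.1) g.2
          - W g.2 (a + 2 * b + 3 * c + 1 - 2 * g.2 - g.1))
        + ∑ g ∈ setM a b c, (W (a + b + 2 * c + 1 - g.2) g.2
          - W g.2 (a + b + 2 * c + 1 - g.2)) := by
  rw [step1 ha hb hc hab hac hbc, Finset.sum_sub_distrib, Finset.sum_sub_distrib,
    ← starts_G ha hb hc hab hac hbc, ← starts_M ha hb hc hab hac hbc,
    ← ends_G ha hb hc hab hac hbc, ← ends_M ha hb hc hab hac hbc,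
    ← Finset.sum_filter_add_sum_filter_not (starts a b c) (fun p => p.2.1 + p.2.2 < b + c),
    ← Finset.sum_filter_add_sum_filter_not (ends a b c) (fun p =>
      a + b + c - p.1 + 2 * (b + c - p.2.1)
        < b + c + mu a (a + b + c - p.1 + (b + c - p.2.1)))]
  ring

lemma tele (f g : ℤ → K) (i j : ℤ) (hij : i ≤ j + 1)
    (h : ∀ k, i ≤ k → k ≤ j → f k = g k - g (k + 1)) :
    ∑ k ∈ Finset.Icc i j, f k = g i - g (j + 1) := by
  obtain ⟨n, hn⟩ : ∃ n : ℕ, j + 1 = i + n := ⟨(j + 1 - i).toNat, by omega⟩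
  induction n generalizing j with
  | zero =>
    rw [Finset.Icc_eq_empty (by omega), Finset.sum_empty, hn]
    simp
  | succ n ih =>
    have h1 := ih (j - 1) (by omega) (fun k h1 h2 => h k h1 (by omega)) (by push_cast at hn; omega)
    have e : Finset.Icc i j = insert j (Finset.Icc i (j - 1)) := by
      ext k
      simp only [Finset.mem_insert, Finset.mem_Icc]
      push_cast at hn
      omega
    rw [e, Finset.sum_insert (by simp), h1, h j (by push_cast at hn; omega) le_rfl,
      sub_add_cancel]
    ring

lemma Icc_split (f : ℤ → K) (i j k : ℤ) (h1 : i ≤ j) (h2 : j ≤ k + 1) :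
    ∑ z ∈ Finset.Icc i k, f z = ∑ z ∈ Finset.Icc i (j - 1), f z + ∑ z ∈ Finset.Icc j k, f z := by
  rw [← Finset.sum_union]
  · congr 1
    ext z
    simp only [Finset.mem_union, Finset.mem_Icc]
    omega
  · rw [Finset.disjoint_left]
    intro z
    simp only [Finset.mem_Icc]
    omega

lemma Wsh {m n : ℤ} (m' n' : ℤ) (i j : ℕ) (hm : m = m' + i) (hn : n = n' + j) :
    W m n = W m' n' * (q ^ i * t ^ j) := by
  rw [hm, hn, W_add, zpow_natCast, zpow_natCast]

lemma G_inner (A s z : ℤ) (h : 2 * z ≤ s) :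
    ∑ y ∈ Finset.Icc z (s - 1 - z), (W (A + 1 - 2 * y - z) y - W y (A + 1 - 2 * y - z))
      = (W (A + 3 - 3 * z) z - W (A + 3 - 2 * s + z) (s - z)) / (q ^ 2 - t)
        - (W z (A + 3 - 3 * z) - W (s - z) (A + 3 - 2 * s + z)) / (t ^ 2 - q) := by
  rw [tele _ (fun y => W (A + 3 - 2 * y - z) y / (q ^ 2 - t)
    - W y (A + 3 - 2 * y - z) / (t ^ 2 - q)) _ _ (by omega)]
  · rw [show A + 3 - 2 * z - z = A + 3 - 3 * z by ring, show s - 1 - z + 1 = s - z by ring,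
      show A + 3 - 2 * (s - z) - z = A + 3 - 2 * s + z by ring]
    ring
  · intro y _ _
    have h1 := d21
    have h2 := d12
    rw [Wsh (m := A + 3 - 2 * y - z) (n := y) (A + 1 - 2 * y - z) y 2 0 (by push_cast; ring) (by simp),
      Wsh (n := A + 3 - 2 * y - z) (m := y) y (A + 1 - 2 * y - z) 0 2 (by simp) (by push_cast; ring),
      Wsh (m := A + 3 - 2 * (y + 1) - z) (n := y + 1) (A + 1 - 2 * y - z) y 0 1
        (by push_cast; ring) (by simp),
      Wsh (n := A + 3 - 2 * (y + 1) - z) (m := y + 1) y (A + 1 - 2 * y - z) 1 0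
        (by simp) (by push_cast; ring)]
    field_simp
    ring

/-- Antiderivative for the outer sum over the first index set. -/
def gG (A s z : ℤ) : K :=
  (W (A + 6 - 3 * z) z / (q ^ 3 - t) + W (A + 3 - 2 * s + z) (s - z + 1) / (q - t)) / (q ^ 2 - t)
  - (W z (A + 6 - 3 * z) / (t ^ 3 - q) + W (s - z + 1) (A + 3 - 2 * s + z) / (t - q)) / (t ^ 2 - q)

lemma d11' : t - q ≠ 0 := by
  intro h
  apply d11
  linear_combination -h

lemma gG_eq (A s z : ℤ) :
    (W (A + 3 - 3 * z) z - W (A + 3 - 2 * s + z) (s - z)) / (q ^ 2 - t)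
        - (W z (A + 3 - 3 * z) - W (s - z) (A + 3 - 2 * s + z)) / (t ^ 2 - q)
      = gG A s z - gG A s (z + 1) := by
  unfold gG
  rw [Wsh (m := A + 6 - 3 * z) (n := z) (A + 3 - 3 * z) z 3 0 (by push_cast; ring) (by simp),
    Wsh (n := A + 6 - 3 * z) (m := z) z (A + 3 - 3 * z) 0 3 (by simp) (by push_cast; ring),
    Wsh (m := A + 6 - 3 * (z + 1)) (n := z + 1) (A + 3 - 3 * z) z 0 1
      (by push_cast; ring) (by simp),
    Wsh (n := A + 6 - 3 * (z + 1)) (m := z + 1) z (A + 3 - 3 * z) 1 0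
      (by simp) (by push_cast; ring),
    Wsh (m := A + 3 - 2 * s + z) (n := s - z + 1) (A + 3 - 2 * s + z) (s - z) 0 1 (by simp) (by simp),
    Wsh (n := A + 3 - 2 * s + z) (m := s - z + 1) (s - z) (A + 3 - 2 * s + z) 1 0 (by simp) (by simp),
    Wsh (m := A + 3 - 2 * s + (z + 1)) (n := s - (z + 1) + 1) (A + 3 - 2 * s + z) (s - z) 1 0
      (by push_cast; ring) (by push_cast; ring),
    Wsh (n := A + 3 - 2 * s + (z + 1)) (m := s - (z + 1) + 1) (s - z) (A + 3 - 2 * s + z) 0 1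
      (by push_cast; ring) (by push_cast; ring)]
  generalize W (A + 3 - 3 * z) z = w1
  generalize W z (A + 3 - 3 * z) = w2
  generalize W (A + 3 - 2 * s + z) (s - z) = w3
  generalize W (s - z) (A + 3 - 2 * s + z) = w4
  have e1 : w1 = (w1 * q ^ 3 - w1 * t) / (q ^ 3 - t) := by
    have := d31; field_simp
  have e2 : w2 = (w2 * t ^ 3 - w2 * q) / (t ^ 3 - q) := by
    have := d13; field_simp
  have e3 : w3 = (w3 * q - w3 * t) / (q - t) := by
    have := d11; field_simp
  have e4 : w4 = (w4 * t - w4 * q) / (t - q) := by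
    have := d11'; field_simp
  linear_combination e1 / (q ^ 2 - t) - e3 / (q ^ 2 - t) - e2 / (t ^ 2 - q) + e4 / (t ^ 2 - q)

lemma G_total (A s p : ℤ) (hp : 0 ≤ p) (h : 2 * p ≤ s) :
    ∑ z ∈ Finset.Icc 0 p, ∑ y ∈ Finset.Icc z (s - 1 - z),
        (W (A + 1 - 2 * y - z) y - W y (A + 1 - 2 * y - z))
      = gG A s 0 - gG A s (p + 1) := by
  apply tele _ _ _ _ (by omega)
  intro z h1 h2
  rw [G_inner A s z (by omega), gG_eq]

/-- Antiderivative for the inner sum over the second index set. -/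
def Psi (C y : ℤ) : K := (W (C + 2 - y) y + W y (C + 2 - y)) / (q - t)

lemma Psi_symm (C y y' : ℤ) (h : y' = C + 2 - y) : Psi C y' = Psi C y := by
  subst h
  unfold Psi
  rw [show C + 2 - (C + 2 - y) = y by ring]
  ring

lemma M_inner (C l u : ℤ) (h : l ≤ u + 1) :
    ∑ y ∈ Finset.Icc l u, (W (C + 1 - y) y - W y (C + 1 - y)) = Psi C l - Psi C (u + 1) := by
  apply tele _ _ _ _ h
  intro y _ _
  have h1 := d11
  unfold Psi
  rw [Wsh (m := C + 2 - y) (n := y) (C + 1 - y) y 1 0 (by push_cast; ring) (by simp),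
    Wsh (n := C + 2 - y) (m := y) y (C + 1 - y) 0 1 (by simp) (by push_cast; ring),
    Wsh (m := C + 2 - (y + 1)) (n := y + 1) (C + 1 - y) y 0 1 (by push_cast; ring) (by simp),
    Wsh (n := C + 2 - (y + 1)) (m := y + 1) y (C + 1 - y) 1 0 (by simp) (by push_cast; ring)]
  field_simp
  ring

/-- Antisymmetrized monomials. -/
def X (m n : ℤ) : K := W m n - W n m

/-- Antiderivative for `Ψ(s-z)`. -/
def g1 (C s z : ℤ) : K := - X (C + 2 - s + z) (s - z + 1) / (q - t) ^ 2

/-- Antiderivative for `-Ψ(a+2z+1)`. -/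
def g2 (C a z : ℤ) : K := - X (C - a + 3 - 2 * z) (a + 1 + 2 * z) / ((q ^ 2 - t ^ 2) * (q - t))

/-- Antiderivative for `Ψ(r-2z)`. -/
def g3 (C r z : ℤ) : K := - X (C + 2 - r + 2 * z) (r - 2 * z + 2) / ((q ^ 2 - t ^ 2) * (q - t))

lemma d22 : q ^ 2 - t ^ 2 ≠ 0 := by
  have h : q ^ 2 - t ^ 2 = (q - t) * (q + t) := by ring
  rw [h]
  exact mul_ne_zero d11 s11

lemma g1_eq (C s z : ℤ) : Psi C (s - z) = g1 C s z - g1 C s (z + 1) := by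
  have h1 := d11
  unfold Psi g1 X
  rw [Wsh (m := C + 2 - (s - z)) (n := s - z) (C + 2 - s + z) (s - z) 0 0 (by push_cast; ring) (by simp),
    Wsh (n := C + 2 - (s - z)) (m := s - z) (s - z) (C + 2 - s + z) 0 0 (by simp) (by push_cast; ring),
    Wsh (m := C + 2 - s + z) (n := s - z + 1) (C + 2 - s + z) (s - z) 0 1 (by simp) (by simp),
    Wsh (n := C + 2 - s + z) (m := s - z + 1) (s - z) (C + 2 - s + z) 1 0 (by simp) (by simp),
    Wsh (m := C + 2 - s + (z + 1)) (n := s - (z + 1) + 1) (C + 2 - s + z) (s - z) 1 0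
      (by push_cast; ring) (by push_cast; ring),
    Wsh (n := C + 2 - s + (z + 1)) (m := s - (z + 1) + 1) (s - z) (C + 2 - s + z) 0 1
      (by push_cast; ring) (by push_cast; ring)]
  field_simp
  ring

lemma g2_eq (C a z : ℤ) : - Psi C (a + 2 * z + 1) = g2 C a z - g2 C a (z + 1) := by
  have h1 := d11
  have h2 := d22
  unfold Psi g2 X
  rw [Wsh (m := C + 2 - (a + 2 * z + 1)) (n := a + 2 * z + 1) (C + 1 - a - 2 * z) (a + 2 * z + 1) 0 0
      (by push_cast; ring) (by simp),
    Wsh (n := C + 2 - (a + 2 * z + 1)) (m := a + 2 * z + 1) (a + 2 * z + 1) (C + 1 - a - 2 * z) 0 0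
      (by simp) (by push_cast; ring),
    Wsh (m := C - a + 3 - 2 * z) (n := a + 1 + 2 * z) (C + 1 - a - 2 * z) (a + 2 * z + 1) 2 0
      (by push_cast; ring) (by push_cast; ring),
    Wsh (n := C - a + 3 - 2 * z) (m := a + 1 + 2 * z) (a + 2 * z + 1) (C + 1 - a - 2 * z) 0 2
      (by push_cast; ring) (by push_cast; ring),
    Wsh (m := C - a + 3 - 2 * (z + 1)) (n := a + 1 + 2 * (z + 1)) (C + 1 - a - 2 * z) (a + 2 * z + 1) 0 2
      (by push_cast; ring) (by push_cast; ring),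
    Wsh (n := C - a + 3 - 2 * (z + 1)) (m := a + 1 + 2 * (z + 1)) (a + 2 * z + 1) (C + 1 - a - 2 * z) 2 0
      (by push_cast; ring) (by push_cast; ring)]
  field_simp
  ring

lemma g3_eq (C r z : ℤ) : Psi C (r - 2 * z) = g3 C r z - g3 C r (z + 1) := by
  have h1 := d11
  have h2 := d22
  unfold Psi g3 X
  rw [Wsh (m := C + 2 - (r - 2 * z)) (n := r - 2 * z) (C + 2 - r + 2 * z) (r - 2 * z) 0 0
      (by push_cast; ring) (by simp),
    Wsh (n := C + 2 - (r - 2 * z)) (m := r - 2 * z) (r - 2 * z) (C + 2 - r + 2 * z) 0 0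
      (by simp) (by push_cast; ring),
    Wsh (m := C + 2 - r + 2 * z) (n := r - 2 * z + 2) (C + 2 - r + 2 * z) (r - 2 * z) 0 2
      (by push_cast; ring) (by push_cast; ring),
    Wsh (n := C + 2 - r + 2 * z) (m := r - 2 * z + 2) (r - 2 * z) (C + 2 - r + 2 * z) 2 0
      (by push_cast; ring) (by push_cast; ring),
    Wsh (m := C + 2 - r + 2 * (z + 1)) (n := r - 2 * (z + 1) + 2) (C + 2 - r + 2 * z) (r - 2 * z) 2 0
      (by push_cast; ring) (by push_cast; ring),
    Wsh (n := C + 2 - r + 2 * (z + 1)) (m := r - 2 * (z + 1) + 2) (r - 2 * z) (C + 2 - r + 2 * z) 0 2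
      (by push_cast; ring) (by push_cast; ring)]
  field_simp
  ring

lemma X_comb (m n : ℤ) : (q + t) * X m n = X (m + 1) n + X m (n + 1) := by
  unfold X
  rw [Wsh (m := m + 1) (n := n) m n 1 0 (by simp) (by simp),
    Wsh (m := m) (n := n + 1) m n 0 1 (by simp) (by simp),
    Wsh (m := n + 1) (n := m) n m 1 0 (by simp) (by simp),
    Wsh (m := n) (n := m + 1) n m 0 1 (by simp) (by simp)]
  ring

lemma g_join {a s C z0 : ℤ} (hz : s - a = 2 * z0 ∨ s - a = 2 * z0 - 1) :
    g3 C (2 * s - a) z0 + g2 C a z0 - g3 C (2 * s - a) (s - a) + g1 C s (s - a)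
      = g1 C s 0 + g2 C a 0 := by
  have k1 := X_comb (C + 2 - s) (s + 1)
  have k2 := X_comb (C + 2 - a) (a + 1)
  have h1 := d11
  have h2 := s11
  have h3 : g3 C (2 * s - a) z0 + g2 C a z0
      = - (X (C + 2 - s) (s + 1 + 1) + X (C + 2 - s + 1) (s + 1)) / ((q ^ 2 - t ^ 2) * (q - t)) := by
    unfold g3 g2
    rcases hz with hz | hz
    · rw [show C + 2 - (2 * s - a) + 2 * z0 = C + 2 - s by omega,
        show 2 * s - a - 2 * z0 + 2 = s + 1 + 1 by omega,
        show C - a + 3 - 2 * z0 = C + 2 - s + 1 by omega,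
        show a + 1 + 2 * z0 = s + 1 by omega]
      ring
    · rw [show C + 2 - (2 * s - a) + 2 * z0 = C + 2 - s + 1 by omega,
        show 2 * s - a - 2 * z0 + 2 = s + 1 by omega,
        show C - a + 3 - 2 * z0 = C + 2 - s by omega,
        show a + 1 + 2 * z0 = s + 1 + 1 by omega]
      ring
  rw [h3]
  unfold g3 g1 g2
  rw [show C + 2 - (2 * s - a) + 2 * (s - a) = C + 2 - a by ring,
    show 2 * s - a - 2 * (s - a) + 2 = a + 1 + 1 by ring,
    show C + 2 - s + (s - a) = C + 2 - a by ring, show s - (s - a) + 1 = a + 1 by ring,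
    show C + 2 - s + 0 = C + 2 - s by ring, show s - 0 + 1 = s + 1 by ring,
    show C - a + 3 - 2 * 0 = C + 2 - a + 1 by ring, show a + 1 + 2 * 0 = a + 1 by ring]
  rw [show q ^ 2 - t ^ 2 = (q - t) * (q + t) by ring]
  field_simp
  linear_combination k1 - k2

lemma M_total {a b c : ℤ} (ha : 0 ≤ a) (hb : 0 ≤ b) (hc : 0 ≤ c)
    (hab : b ≤ a + 1) (hac : c ≤ a + 1) (hbc : c ≤ b + 1) :
    ∑ z ∈ Finset.Icc 0 (min b c),
      ∑ y ∈ Finset.Icc (max (b + c - z) (2 * b + 2 * c - a - 2 * z))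
          (min (a + 2 * z) (b + 2 * c - 2 * z)),
        (W (a + b + 2 * c + 1 - y) y - W y (a + b + 2 * c + 1 - y))
      = g1 (a + b + 2 * c) (b + c) 0 + g2 (a + b + 2 * c) a 0
        - (g1 (a + b + 2 * c) (b + c) (min b c + 1) + g2 (a + b + 2 * c) a (min b c + 1)) := by
  have hu : ∀ z, Psi (a + b + 2 * c) (min (a + 2 * z) (b + 2 * c - 2 * z) + 1)
      = Psi (a + b + 2 * c) (a + 2 * z + 1) := by
    intro z
    rcases le_total (a + 2 * z) (b + 2 * c - 2 * z) with h | h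
    · rw [min_eq_left h]
    · rw [min_eq_right h]
      exact Psi_symm _ _ _ (by ring)
  -- the upper range
  have hup : ∀ z0, 0 ≤ z0 → b + c - a ≤ z0 → z0 ≤ min b c + 1 →
      ∑ z ∈ Finset.Icc z0 (min b c),
        ∑ y ∈ Finset.Icc (max (b + c - z) (2 * b + 2 * c - a - 2 * z))
          (min (a + 2 * z) (b + 2 * c - 2 * z)),
          (W (a + b + 2 * c + 1 - y) y - W y (a + b + 2 * c + 1 - y))
      = (g1 (a + b + 2 * c) (b + c) z0 + g2 (a + b + 2 * c) a z0)
        - (g1 (a + b + 2 * c) (b + c) (min b c + 1) + g2 (a + b + 2 * c) a (min b c + 1)) := by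
    intro z0 h0 h1 h2
    apply tele _ (fun z => g1 (a + b + 2 * c) (b + c) z + g2 (a + b + 2 * c) a z) _ _ h2
    intro z h3 h4
    rw [M_inner _ _ _ (by omega), hu, max_eq_left (by omega)]
    linear_combination g1_eq (a + b + 2 * c) (b + c) z + g2_eq (a + b + 2 * c) a z
  rcases le_total (b + c) a with h | h
  · exact hup 0 le_rfl (by omega) (by omega)
  · rw [Icc_split _ 0 (b + c - a) _ (by omega) (by omega), hup _ (by omega) le_rfl (by omega),
      Icc_split _ 0 ((b + c - a + 1) / 2) _ (by omega) (by omega)]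
    have hz : ∑ z ∈ Finset.Icc 0 ((b + c - a + 1) / 2 - 1),
        ∑ y ∈ Finset.Icc (max (b + c - z) (2 * b + 2 * c - a - 2 * z))
          (min (a + 2 * z) (b + 2 * c - 2 * z)),
          (W (a + b + 2 * c + 1 - y) y - W y (a + b + 2 * c + 1 - y)) = 0 := by
      apply Finset.sum_eq_zero
      intro z hz
      rw [Finset.mem_Icc] at hz
      rw [Finset.Icc_eq_empty (by omega), Finset.sum_empty]
    rw [hz, tele _ (fun z => g3 (a + b + 2 * c) (2 * (b + c) - a) z + g2 (a + b + 2 * c) a z) _ _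
      (by omega)]
    · rw [show b + c - a - 1 + 1 = b + c - a by ring]
      have := g_join (a := a) (s := b + c) (C := a + b + 2 * c) (z0 := (b + c - a + 1) / 2)
        (by omega)
      linear_combination this
    · intro z h3 h4
      rw [M_inner _ _ _ (by omega), hu, max_eq_right (by omega)]
      have := g3_eq (a + b + 2 * c) (2 * (b + c) - a) z
      rw [show 2 * b + 2 * c - a - 2 * z = 2 * (b + c) - a - 2 * z by ring]
      linear_combination this + g2_eq (a + b + 2 * c) a z

lemma H_form (a b c : ℤ) (x y : K) (hx : x ≠ 0) (hy : y ≠ 0) (h11 : x - y ≠ 0) (hs : x + y ≠ 0)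
    (h21 : x ^ 2 - y ≠ 0) (h31 : x ^ 3 - y ≠ 0) :
    x * H₃ a b c x y
      = x ^ (a + 2 * b + 3 * c) * (x ^ 6 / (x ^ 3 - y) / (x ^ 2 - y))
        - x ^ (a + 2 * b) * y ^ c * (x ^ 3 * y / (x ^ 3 - y) / (x ^ 2 - y))
        + x ^ (a + 2 * c) * y ^ b * (- x ^ 4 / (x - y) / (x ^ 2 - y) + x ^ 3 / (x - y) ^ 2
            - x ^ 3 * y / ((x ^ 2 - y ^ 2) * (x - y)))
        + x ^ a * y ^ (b + 2 * c) * (x * y ^ 3 / ((x ^ 2 - y ^ 2) * (x - y)))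
        + x ^ (a + c) * y ^ (b + c) * (x ^ 3 * y / (x - y) / (x ^ 2 - y)
            - x ^ 2 * y / (x - y) ^ 2) := by
  unfold H₃
  generalize x ^ (a + 2 * b + 3 * c) = w1
  generalize x ^ (a + 2 * b) * y ^ c = w2
  generalize x ^ (a + 2 * c) * y ^ b = w3
  generalize x ^ a * y ^ (b + 2 * c) = w4
  generalize x ^ (a + c) * y ^ (b + c) = w5
  have e1 : 1 - y / x ^ 2 = (x ^ 2 - y) / x ^ 2 := by field_simp
  have e2 : 1 - y / x ^ 3 = (x ^ 3 - y) / x ^ 3 := by field_simp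
  have e3 : 1 - x ^ 3 / y = - (x ^ 3 - y) / y := by field_simp; ring
  have e4 : 1 - x ^ 2 / y = - (x ^ 2 - y) / y := by field_simp; ring
  have e5 : 1 - y ^ 2 / x ^ 2 = (x - y) * (x + y) / x ^ 2 := by field_simp; ring
  have e6 : 1 - x ^ 2 / y ^ 2 = - ((x - y) * (x + y)) / y ^ 2 := by field_simp; ring
  have e7 : 1 - x / y = - (x - y) / y := by field_simp; ring
  have e8 : 1 - y / x = (x - y) / x := by field_simp
  have e9 : x ^ 2 - y ^ 2 = (x - y) * (x + y) := by ring
  rw [e1, e2, e3, e4, e5, e6, e7, e8, e9]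
  have k1 : x * (w1 / ((x ^ 2 - y) / x ^ 2 * ((x ^ 3 - y) / x ^ 3)))
      = w1 * (x ^ 6 / (x ^ 3 - y) / (x ^ 2 - y)) := by field_simp
  have k2 : x * (w2 / ((x ^ 2 - y) / x ^ 2 * (- (x ^ 3 - y) / y)))
      = - (w2 * (x ^ 3 * y / (x ^ 3 - y) / (x ^ 2 - y))) := by field_simp
  have k3 : x * (w3 * (1 - y) / ((x - y) * (x + y) / x ^ 2 * (- (x ^ 2 - y) / y) * ((x - y) / x)))
      = w3 * (- x ^ 4 / (x - y) / (x ^ 2 - y) + x ^ 3 / (x - y) ^ 2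
            - x ^ 3 * y / ((x - y) * (x + y) * (x - y))) := by field_simp; ring
  have k4 : x * (w4 / (- ((x - y) * (x + y)) / y ^ 2 * (- (x - y) / y)))
      = w4 * (x * y ^ 3 / ((x - y) * (x + y) * (x - y))) := by field_simp
  have k5 : x * (w5 * (1 - x) / (- (x ^ 2 - y) / y * (- (x - y) / y) * ((x - y) / x)))
      = w5 * (x ^ 3 * y / (x - y) / (x ^ 2 - y) - x ^ 2 * y / (x - y) ^ 2) := by field_simp; ring
  linear_combination k1 + k2 + k3 + k4 + k5

lemma F_form (a b c : ℤ) :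
    (q - t) * F₃ a b c = q * H₃ a b c q t - t * H₃ a b c t q := by
  unfold F₃
  have h1 := d11
  have h2 := d11'
  have h3 := q_ne
  have h4 := t_ne
  rw [show 1 - t / q = (q - t) / q by field_simp, show 1 - q / t = - (q - t) / t by field_simp; ring]
  field_simp
  ring

lemma final_c (a b c : ℤ) :
    gG (a + 2 * b + 3 * c) (b + c) 0 - gG (a + 2 * b + 3 * c) (b + c) (c + 1)
      + (g1 (a + b + 2 * c) (b + c) 0 + g2 (a + b + 2 * c) a 0
        - (g1 (a + b + 2 * c) (b + c) (c + 1) + g2 (a + b + 2 * c) a (c + 1)))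
      = (q - t) * F₃ a b c := by
  rw [F_form, H_form a b c q t q_ne t_ne d11 s11 d21 d31,
    H_form a b c t q t_ne q_ne d11' (by rw [add_comm]; exact s11) d12 d13]
  rw [show (t - q) ^ 2 = (q - t) ^ 2 by ring,
    show (t ^ 2 - q ^ 2) * (t - q) = (q ^ 2 - t ^ 2) * (q - t) by ring]
  have w1 : q ^ (a + 2 * b + 3 * c) = W (a + 2 * b + 3 * c) 0 := by simp [W]
  have w1' : t ^ (a + 2 * b + 3 * c) = W 0 (a + 2 * b + 3 * c) := by simp [W]
  have w2 : q ^ (a + 2 * b) * t ^ c = W (a + 2 * b) c := rfl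
  have w2' : t ^ (a + 2 * b) * q ^ c = W c (a + 2 * b) := mul_comm _ _
  have w3 : q ^ (a + 2 * c) * t ^ b = W (a + 2 * c) b := rfl
  have w3' : t ^ (a + 2 * c) * q ^ b = W b (a + 2 * c) := mul_comm _ _
  have w4 : q ^ a * t ^ (b + 2 * c) = W a (b + 2 * c) := rfl
  have w4' : t ^ a * q ^ (b + 2 * c) = W (b + 2 * c) a := mul_comm _ _
  have w5 : q ^ (a + c) * t ^ (b + c) = W (a + c) (b + c) := rfl
  have w5' : t ^ (a + c) * q ^ (b + c) = W (b + c) (a + c) := mul_comm _ _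
  rw [w1, w1', w2, w2', w3, w3', w4, w4', w5, w5']
  unfold gG g1 g2 X
  rw [Wsh (m := a + 2 * b + 3 * c + 6 - 3 * 0) (n := 0) (a + 2 * b + 3 * c) 0 6 0
      (by push_cast; ring) (by simp),
    Wsh (n := a + 2 * b + 3 * c + 6 - 3 * 0) (m := 0) 0 (a + 2 * b + 3 * c) 0 6
      (by simp) (by push_cast; ring),
    Wsh (m := a + 2 * b + 3 * c + 6 - 3 * (c + 1)) (n := c + 1) (a + 2 * b) c 3 1
      (by push_cast; ring) (by simp),
    Wsh (n := a + 2 * b + 3 * c + 6 - 3 * (c + 1)) (m := c + 1) c (a + 2 * b) 1 3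
      (by simp) (by push_cast; ring),
    Wsh (m := a + 2 * b + 3 * c + 3 - 2 * (b + c) + 0) (n := b + c - 0 + 1) (a + c) (b + c) 3 1
      (by push_cast; ring) (by push_cast; ring),
    Wsh (n := a + 2 * b + 3 * c + 3 - 2 * (b + c) + 0) (m := b + c - 0 + 1) (b + c) (a + c) 1 3
      (by push_cast; ring) (by push_cast; ring),
    Wsh (m := a + 2 * b + 3 * c + 3 - 2 * (b + c) + (c + 1)) (n := b + c - (c + 1) + 1)
      (a + 2 * c) b 4 0 (by push_cast; ring) (by push_cast; ring),
    Wsh (n := a + 2 * b + 3 * c + 3 - 2 * (b + c) + (c + 1)) (m := b + c - (c + 1) + 1)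
      b (a + 2 * c) 0 4 (by push_cast; ring) (by push_cast; ring),
    Wsh (m := a + b + 2 * c + 2 - (b + c) + 0) (n := b + c - 0 + 1) (a + c) (b + c) 2 1
      (by push_cast; ring) (by push_cast; ring),
    Wsh (n := a + b + 2 * c + 2 - (b + c) + 0) (m := b + c - 0 + 1) (b + c) (a + c) 1 2
      (by push_cast; ring) (by push_cast; ring),
    Wsh (m := a + b + 2 * c + 2 - (b + c) + (c + 1)) (n := b + c - (c + 1) + 1)
      (a + 2 * c) b 3 0 (by push_cast; ring) (by push_cast; ring),
    Wsh (n := a + b + 2 * c + 2 - (b + c) + (c + 1)) (m := b + c - (c + 1) + 1)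
      b (a + 2 * c) 0 3 (by push_cast; ring) (by push_cast; ring),
    Wsh (m := a + b + 2 * c - a + 3 - 2 * 0) (n := a + 1 + 2 * 0) (b + 2 * c) a 3 1
      (by push_cast; ring) (by push_cast; ring),
    Wsh (n := a + b + 2 * c - a + 3 - 2 * 0) (m := a + 1 + 2 * 0) a (b + 2 * c) 1 3
      (by push_cast; ring) (by push_cast; ring),
    Wsh (m := a + b + 2 * c - a + 3 - 2 * (c + 1)) (n := a + 1 + 2 * (c + 1)) b (a + 2 * c) 1 3
      (by push_cast; ring) (by push_cast; ring),
    Wsh (n := a + b + 2 * c - a + 3 - 2 * (c + 1)) (m := a + 1 + 2 * (c + 1)) (a + 2 * c) b 3 1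
      (by push_cast; ring) (by push_cast; ring)]
  generalize W (a + 2 * b + 3 * c) 0 = u1
  generalize W 0 (a + 2 * b + 3 * c) = v1
  generalize W (a + 2 * b) c = u2
  generalize W c (a + 2 * b) = v2
  generalize W (a + 2 * c) b = u3
  generalize W b (a + 2 * c) = v3
  generalize W a (b + 2 * c) = u4
  generalize W (b + 2 * c) a = v4
  generalize W (a + c) (b + c) = u5
  generalize W (b + c) (a + c) = v5
  generalize ((q ^ 2 - t ^ 2) * (q - t)) = D1
  generalize (q - t) ^ 2 = D2
  ring

lemma cross (a b : ℤ) :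
    (gG (a + 2 * b + 3 * (b + 1)) (b + (b + 1)) (b + 1)
        - gG (a + 2 * b + 3 * (b + 1)) (b + (b + 1)) (b + 1 + 1))
      + (g1 (a + b + 2 * (b + 1)) (b + (b + 1)) (b + 1)
        - g1 (a + b + 2 * (b + 1)) (b + (b + 1)) (b + 1 + 1))
      + (g2 (a + b + 2 * (b + 1)) a (b + 1) - g2 (a + b + 2 * (b + 1)) a (b + 1 + 1)) = 0 := by
  rw [← gG_eq, ← g1_eq, ← g2_eq]
  unfold Psi
  have h1 := d11
  have h2 := d21
  have h3 := d12
  rw [Wsh (m := a + 2 * b + 3 * (b + 1) + 3 - 3 * (b + 1)) (n := b + 1) (a + 2 * b) b 3 1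
      (by push_cast; ring) (by push_cast; ring),
    Wsh (n := a + 2 * b + 3 * (b + 1) + 3 - 3 * (b + 1)) (m := b + 1) b (a + 2 * b) 1 3
      (by push_cast; ring) (by push_cast; ring),
    Wsh (m := a + 2 * b + 3 * (b + 1) + 3 - 2 * (b + (b + 1)) + (b + 1)) (n := b + (b + 1) - (b + 1))
      (a + 2 * b) b 5 0 (by push_cast; ring) (by push_cast; ring),
    Wsh (n := a + 2 * b + 3 * (b + 1) + 3 - 2 * (b + (b + 1)) + (b + 1)) (m := b + (b + 1) - (b + 1))
      b (a + 2 * b) 0 5 (by push_cast; ring) (by push_cast; ring),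
    Wsh (m := a + b + 2 * (b + 1) + 2 - (b + (b + 1) - (b + 1))) (n := b + (b + 1) - (b + 1))
      (a + 2 * b) b 4 0 (by push_cast; ring) (by push_cast; ring),
    Wsh (n := a + b + 2 * (b + 1) + 2 - (b + (b + 1) - (b + 1))) (m := b + (b + 1) - (b + 1))
      b (a + 2 * b) 0 4 (by push_cast; ring) (by push_cast; ring),
    Wsh (m := a + b + 2 * (b + 1) + 2 - (a + 2 * (b + 1) + 1)) (n := a + 2 * (b + 1) + 1)
      b (a + 2 * b) 1 3 (by push_cast; ring) (by push_cast; ring),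
    Wsh (n := a + b + 2 * (b + 1) + 2 - (a + 2 * (b + 1) + 1)) (m := a + 2 * (b + 1) + 1)
      (a + 2 * b) b 3 1 (by push_cast; ring) (by push_cast; ring)]
  generalize W (a + 2 * b) b = u
  generalize W b (a + 2 * b) = v
  field_simp
  ring

theorem F₃_combinatorial_formula (a b c : ℤ) (ha : 0 ≤ a) (hb : 0 ≤ b) (hc : 0 ≤ c)
    (hab : b ≤ a + 1) (hac : c ≤ a + 1) (hbc : c ≤ b + 1) :
    F₃ a b c
      = ∑ w ∈ subparts a b c,
          q ^ (a + 2 * b + 3 * c - (w.1 + w.2.1 + w.2.2))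
            * t ^ (statFn a b c w.1 w.2.1 w.2.2) := by
  apply mul_left_cancel₀ d11
  have h := step2 ha hb hc hab hac hbc
  unfold setG setM at h
  rw [Finset.sum_sigma, Finset.sum_sigma] at h
  dsimp only at h
  rw [G_total (a + 2 * b + 3 * c) (b + c) (min b c) (by omega) (by omega),
    M_total ha hb hc hab hac hbc] at h
  refine Eq.trans ?_ h.symm
  rw [← final_c]
  rcases eq_or_lt_of_le hbc with hh | hh
  · subst hh
    rw [min_eq_left (by omega)]
    linear_combination cross a b
  · rw [min_eq_right (by omega)]
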